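/- arXiv:2506.04921 — 4 statements merged into one kernel-verified Lean document; each statement's English description precedes it below -/
import Mathlib

section
/- Let y : [0, α] → ℝ be differentiable with y(0) = 0 and y(s) ∈ [0, b] for all s, satisfying the ODE y'(s) = ∑_{d=1}^{D} (1 − exp(−a_d (b − y(s)))) Q_d for all s ∈ [0, α]. Set ỹ(s) = b − b·exp(−L s). Then for every s ∈ [0, α], 0 ≤ ỹ(s) − y(s) ≤ (J/L)·(1 − exp(−L s)); in particular |y(s) − ỹ(s)| ≤ (J/L)(1 − exp(−L s)). -/
open Real

/-!
The remaining supply `u = b - y` solves `u' = -g(u)` with `g x = ∑ d, (1 - exp (-a d * x)) * Q d`.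
For `x ≥ 0`, `x - x² / 2 ≤ 1 - exp (-x) ≤ x`, so `g` deviates from the linear rate `L * x` only
quadratically. The upper bound on `g` gives `u' ≥ -L * u`, so `u` dominates `b * exp (-L * s)`; in
particular `u` stays nonnegative, hence is nonincreasing and at most `b`. The quadratic error is
therefore at most `J`, that is `u' ≤ -L * u + J`, and Grönwall's inequality with the negative rate
`-L` gives the other estimate.
-/

section DifferentialInequality

variable {f f' : ℝ → ℝ} {K t₀ t₁ : ℝ}

theorem le_gronwallBound_of_deriv_right_le {δ ε : ℝ} (hf : ContinuousOn f (Set.Icc t₀ t₁))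
    (hf' : ∀ t ∈ Set.Ico t₀ t₁, HasDerivWithinAt f (f' t) (Set.Ici t) t)
    (h₀ : f t₀ ≤ δ) (bound : ∀ t ∈ Set.Ico t₀ t₁, f' t ≤ K * f t + ε) :
    ∀ t ∈ Set.Icc t₀ t₁, f t ≤ gronwallBound δ K ε (t - t₀) :=
  le_gronwallBound_of_liminf_deriv_right_le hf
    (fun t ht _ hr => (hf' t ht).liminf_right_slope_le hr) h₀ bound

theorem mul_exp_le_of_mul_le_deriv_right (hf : ContinuousOn f (Set.Icc t₀ t₁))
    (hf' : ∀ t ∈ Set.Ico t₀ t₁, HasDerivWithinAt f (f' t) (Set.Ici t) t)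
    (bound : ∀ t ∈ Set.Ico t₀ t₁, K * f t ≤ f' t) :
    ∀ t ∈ Set.Icc t₀ t₁, f t₀ * exp (K * (t - t₀)) ≤ f t := by
  intro t ht
  have neg_le : -f t ≤ gronwallBound (-f t₀) K 0 (t - t₀) :=
    le_gronwallBound_of_deriv_right_le hf.neg (fun r hr => (hf' r hr).neg) le_rfl
      (fun r hr => by simpa using bound r hr) t ht
  rw [gronwallBound_ε0] at neg_le
  linarith

end DifferentialInequality

theorem sub_sq_div_two_le_one_sub_exp_neg {x : ℝ} (hx : 0 ≤ x) :
    x - x ^ 2 / 2 ≤ 1 - exp (-x) := by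
  suffices exp (-x) ≤ 1 - x + x ^ 2 / 2 by linarith
  calc exp (-x) = (exp x)⁻¹ := exp_neg x
    _ ≤ (1 + x + x ^ 2 / 2)⁻¹ := inv_anti₀ (by positivity) (quadratic_le_exp_of_nonneg hx)
    _ ≤ 1 - x + x ^ 2 / 2 := by
      have product_eq : (1 - x + x ^ 2 / 2) * (1 + x + x ^ 2 / 2) = 1 + x ^ 4 / 4 := by ring
      rw [inv_le_iff_one_le_mul₀ (by positivity), product_eq]
      linarith [show 0 ≤ x ^ 4 by positivity]

section MatchingRate

variable {ι : Type*} [Fintype ι] {a Q : ι → ℝ} {x : ℝ}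

/-- The rate at which the Myopic policy forms matches when the remaining supply is `x`: the
right-hand side of the fluid-limit ODE, as a function of `x = b - y`. -/
noncomputable def matchingRate (a Q : ι → ℝ) (x : ℝ) : ℝ :=
  ∑ d, (1 - exp (-(a d) * x)) * Q d

theorem matchingRate_nonneg (ha : ∀ d, 0 ≤ a d) (hQ : ∀ d, 0 ≤ Q d) (hx : 0 ≤ x) :
    0 ≤ matchingRate a Q x := by
  refine Finset.sum_nonneg fun d _ => mul_nonneg (sub_nonneg.2 ?_) (hQ d)
  rw [exp_le_one_iff, neg_mul, neg_nonpos]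
  exact mul_nonneg (ha d) hx

theorem matchingRate_le (hQ : ∀ d, 0 ≤ Q d) :
    matchingRate a Q x ≤ (∑ d, a d * Q d) * x := by
  rw [matchingRate, Finset.sum_mul]
  refine Finset.sum_le_sum fun d _ => ?_
  have one_sub_exp_le : 1 - exp (-(a d) * x) ≤ a d * x := by
    rw [neg_mul]
    linarith [one_sub_le_exp_neg (a d * x)]
  calc (1 - exp (-(a d) * x)) * Q d ≤ a d * x * Q d :=
        mul_le_mul_of_nonneg_right one_sub_exp_le (hQ d)
    _ = a d * Q d * x := by ring

theorem sub_le_matchingRate (ha : ∀ d, 0 ≤ a d) (hQ : ∀ d, 0 ≤ Q d) (hx : 0 ≤ x) :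
    (∑ d, a d * Q d) * x - x ^ 2 / 2 * ∑ d, a d ^ 2 * Q d ≤ matchingRate a Q x := by
  rw [matchingRate, Finset.sum_mul, Finset.mul_sum, ← Finset.sum_sub_distrib]
  refine Finset.sum_le_sum fun d _ => ?_
  calc a d * Q d * x - x ^ 2 / 2 * (a d ^ 2 * Q d)
      = (a d * x - (a d * x) ^ 2 / 2) * Q d := by ring
    _ ≤ (1 - exp (-(a d) * x)) * Q d := by
      rw [neg_mul]
      exact mul_le_mul_of_nonneg_right
        (sub_sq_div_two_le_one_sub_exp_neg (mul_nonneg (ha d) hx)) (hQ d)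

end MatchingRate

/-- `u` is a remaining supply on `[0, α]` depleted at the matching rate, that is a solution of
`u' = -matchingRate a Q u`. Only right derivatives are prescribed, as in Grönwall's inequality. -/
structure IsRemainingSupply {ι : Type*} [Fintype ι] (a Q : ι → ℝ) (α : ℝ) (u : ℝ → ℝ) : Prop where
  continuousOn : ContinuousOn u (Set.Icc 0 α)
  hasDerivWithinAt : ∀ s ∈ Set.Ico 0 α,
    HasDerivWithinAt u (-matchingRate a Q (u s)) (Set.Ici s) s

namespace IsRemainingSupply

variable {ι : Type*} [Fintype ι] {a Q : ι → ℝ} {α s : ℝ} {u : ℝ → ℝ}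

theorem mul_exp_le (hu : IsRemainingSupply a Q α u) (hQ : ∀ d, 0 ≤ Q d)
    (hs : s ∈ Set.Icc 0 α) :
    u 0 * exp (-(∑ d, a d * Q d) * s) ≤ u s := by
  have bound : ∀ t ∈ Set.Ico 0 α, -(∑ d, a d * Q d) * u t ≤ -matchingRate a Q (u t) :=
    fun t _ => by rw [neg_mul]; exact neg_le_neg (matchingRate_le hQ)
  simpa only [sub_zero] using
    mul_exp_le_of_mul_le_deriv_right hu.continuousOn hu.hasDerivWithinAt bound s hs

theorem nonneg (hu : IsRemainingSupply a Q α u) (hQ : ∀ d, 0 ≤ Q d) (h₀ : 0 ≤ u 0)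
    (hs : s ∈ Set.Icc 0 α) : 0 ≤ u s :=
  (mul_nonneg h₀ (exp_pos _).le).trans (hu.mul_exp_le hQ hs)

theorem le_initial (hu : IsRemainingSupply a Q α u) (ha : ∀ d, 0 ≤ a d) (hQ : ∀ d, 0 ≤ Q d)
    (h₀ : 0 ≤ u 0) (hs : s ∈ Set.Icc 0 α) : u s ≤ u 0 := by
  have bound : ∀ t ∈ Set.Ico 0 α, -matchingRate a Q (u t) ≤ 0 * u t + 0 := fun t ht => by
    rw [zero_mul, add_zero, neg_nonpos]
    exact matchingRate_nonneg ha hQ (hu.nonneg hQ h₀ (Set.Ico_subset_Icc_self ht))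
  simpa only [gronwallBound_K0, zero_mul, add_zero] using
    le_gronwallBound_of_deriv_right_le hu.continuousOn hu.hasDerivWithinAt le_rfl bound s hs

theorem neg_matchingRate_le (hu : IsRemainingSupply a Q α u) (ha : ∀ d, 0 ≤ a d)
    (hQ : ∀ d, 0 ≤ Q d) (h₀ : 0 ≤ u 0) (hs : s ∈ Set.Icc 0 α) :
    -matchingRate a Q (u s) ≤
      -(∑ d, a d * Q d) * u s + u 0 ^ 2 / 2 * ∑ d, a d ^ 2 * Q d := by
  have u_nonneg : 0 ≤ u s := hu.nonneg hQ h₀ hs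
  have quadratic_error_le :
      u s ^ 2 / 2 * ∑ d, a d ^ 2 * Q d ≤ u 0 ^ 2 / 2 * ∑ d, a d ^ 2 * Q d := by
    have sum_nonneg : 0 ≤ ∑ d, a d ^ 2 * Q d :=
      Finset.sum_nonneg fun d _ => mul_nonneg (sq_nonneg _) (hQ d)
    gcongr
    exact hu.le_initial ha hQ h₀ hs
  linarith [sub_le_matchingRate ha hQ u_nonneg]

theorem le_gronwallBound (hu : IsRemainingSupply a Q α u) (ha : ∀ d, 0 ≤ a d)
    (hQ : ∀ d, 0 ≤ Q d) (h₀ : 0 ≤ u 0) (hs : s ∈ Set.Icc 0 α) :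
    u s ≤ gronwallBound (u 0) (-∑ d, a d * Q d) (u 0 ^ 2 / 2 * ∑ d, a d ^ 2 * Q d) s := by
  simpa only [sub_zero] using
    le_gronwallBound_of_deriv_right_le hu.continuousOn hu.hasDerivWithinAt le_rfl
      (fun t ht => hu.neg_matchingRate_le ha hQ h₀ (Set.Ico_subset_Icc_self ht)) s hs

end IsRemainingSupply

theorem myopic_ode_approx_general {ι : Type*} [Fintype ι] {a Q : ι → ℝ}
    (ha : ∀ d, 0 ≤ a d) (hQ : ∀ d, 0 ≤ Q d) {b α L J : ℝ} (hb : 0 ≤ b)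
    (hL : L = ∑ d, a d * Q d) (hJ : J = b ^ 2 / 2 * ∑ d, a d ^ 2 * Q d) (hL₀ : L ≠ 0)
    {y : ℝ → ℝ} (hy0 : y 0 = 0) (hy : ContinuousOn y (Set.Icc 0 α))
    (hODE : ∀ s ∈ Set.Ico 0 α, HasDerivWithinAt y (matchingRate a Q (b - y s)) (Set.Ici s) s) :
    ∀ s ∈ Set.Icc 0 α,
      0 ≤ (b - b * exp (-L * s)) - y s ∧
      (b - b * exp (-L * s)) - y s ≤ J / L * (1 - exp (-L * s)) ∧
      |y s - (b - b * exp (-L * s))| ≤ J / L * (1 - exp (-L * s)) := by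
  intro s hs
  have supply : IsRemainingSupply a Q α (fun t => b - y t) :=
    ⟨continuousOn_const.sub hy, fun t ht => (hODE t ht).const_sub b⟩
  have initial : b - y 0 = b := by rw [hy0, sub_zero]
  have lower : b * exp (-L * s) ≤ b - y s := by
    simpa only [initial, ← hL] using supply.mul_exp_le hQ hs
  have upper : b - y s ≤ b * exp (-L * s) + J / -L * (exp (-L * s) - 1) := by
    simpa only [initial, ← hL, ← hJ, gronwallBound_of_K_ne_0 (neg_ne_zero.2 hL₀)] using
      supply.le_gronwallBound ha hQ (initial.symm ▸ hb) hs
  have error_nonneg : 0 ≤ (b - b * exp (-L * s)) - y s := by linarith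
  have error_le : (b - b * exp (-L * s)) - y s ≤ J / L * (1 - exp (-L * s)) := by
    rw [div_neg] at upper
    linarith
  exact ⟨error_nonneg, error_le, by rwa [abs_sub_comm, abs_of_nonneg error_nonneg]⟩

/-- Fluid-limit ODE approximation error bound for the Myopic matching policy
(Theorem 1, deterministic approximation part). -/
theorem myopic_ode_approx
    (D : ℕ) (hD : 1 ≤ D) (a Q : Fin D → ℝ)
    (ha : ∀ d, 0 ≤ a d) (hQ : ∀ d, 0 ≤ Q d)
    (b α : ℝ) (hb : 0 < b) (hα : 0 < α)
    (L J : ℝ)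
    (hL : L = ∑ d, a d * Q d)
    (hJ : J = b ^ 2 / 2 * ∑ d, (a d) ^ 2 * Q d)
    (hLpos : 0 < L)
    (y : ℝ → ℝ)
    (hy0 : y 0 = 0)
    (hyrange : ∀ s ∈ Set.Icc (0 : ℝ) α, y s ∈ Set.Icc (0 : ℝ) b)
    (hODE : ∀ s ∈ Set.Icc (0 : ℝ) α,
      HasDerivAt y (∑ d, (1 - Real.exp (-(a d) * (b - y s))) * Q d) s) :
    ∀ s ∈ Set.Icc (0 : ℝ) α,
      0 ≤ (b - b * Real.exp (-L * s)) - y s ∧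
      (b - b * Real.exp (-L * s)) - y s ≤ J / L * (1 - Real.exp (-L * s)) ∧
      |y s - (b - b * Real.exp (-L * s))| ≤ J / L * (1 - Real.exp (-L * s)) := by
  exact myopic_ode_approx_general ha hQ hb.le hL hJ hLpos.ne' hy0
    (fun s hs => (hODE s hs).continuousAt.continuousWithinAt)
    fun s hs => (hODE s (Set.Ico_subset_Icc_self hs)).hasDerivWithinAt
end

section
/- Let y : [0, α] → ℝ be differentiable with y(0) = 0 and y'(s) = ∑_{d=1}^{D} (1 − exp(−a_d (b − y(s)))) Q_d for all s ∈ [0, α]. Then for every s ∈ [0, α], 0 ≤ y(s) ≤ b. -/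
/-!
The drift of the ODE is nonnegative at states below `b` and nonpositive at states above `b`, so it
never points out of an interval `[l, b]`. Knowing this sign only outside the interval suffices:
a solution cannot cross the strict barriers `b + ε (1 + t - t₀)`, and `ε` tends to `0`.
-/

open Set

section Barrier

variable {f f' B B' : ℝ → ℝ} {s t : ℝ}

theorem image_le_of_deriv_right_le_deriv_of_boundary_lt (hf : ContinuousOn f (Icc s t))
    (hf' : ∀ x ∈ Ico s t, HasDerivWithinAt f (f' x) (Ici x) x) (hs : f s ≤ B s)
    (hB : ContinuousOn B (Icc s t))
    (hB' : ∀ x ∈ Ico s t, HasDerivWithinAt B (B' x) (Ici x) x)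
    (bound : ∀ x ∈ Ico s t, B x < f x → f' x ≤ B' x) {x : ℝ} (hx : x ∈ Icc s t) :
    f x ≤ B x := by
  have le_barrier : ∀ ε > 0, f x ≤ B x + ε * (1 + (x - s)) := by
    intro ε hε
    refine image_le_of_deriv_right_lt_deriv_boundary' (B := fun z ↦ B z + ε * (1 + (z - s)))
      (B' := fun z ↦ B' z + ε) hf hf' ?_ (hB.add (by fun_prop)) (fun z hz ↦ ?_)
      (fun z hz hfz ↦ ?_) hx
    · rw [sub_self]
      linarith
    · have hasDerivAt_slack : HasDerivAt (fun z ↦ ε * (1 + (z - s))) ε z := by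
        simpa using (((hasDerivAt_id z).sub_const s).const_add 1).const_mul ε
      exact (hB' z hz).add hasDerivAt_slack.hasDerivWithinAt
    · have slack_pos : 0 < ε * (1 + (z - s)) := mul_pos hε (by linarith [hz.1])
      linarith [bound z hz (by linarith)]
  have one_add_pos : 0 < 1 + (x - s) := by linarith [hx.1]
  refine le_of_forall_pos_le_add fun δ hδ ↦ ?_
  simpa only [div_mul_cancel₀ δ one_add_pos.ne'] using
    le_barrier (δ / (1 + (x - s))) (div_pos hδ one_add_pos)

theorem le_image_of_deriv_le_deriv_right_of_lt_boundary (hf : ContinuousOn f (Icc s t))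
    (hf' : ∀ x ∈ Ico s t, HasDerivWithinAt f (f' x) (Ici x) x) (hs : B s ≤ f s)
    (hB : ContinuousOn B (Icc s t))
    (hB' : ∀ x ∈ Ico s t, HasDerivWithinAt B (B' x) (Ici x) x)
    (bound : ∀ x ∈ Ico s t, f x < B x → B' x ≤ f' x) {x : ℝ} (hx : x ∈ Icc s t) :
    B x ≤ f x :=
  neg_le_neg_iff.1 <| image_le_of_deriv_right_le_deriv_of_boundary_lt (f := -f) (B := -B) hf.neg
    (fun z hz ↦ (hf' z hz).neg) (neg_le_neg hs) hB.neg (fun z hz ↦ (hB' z hz).neg)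
    (fun z hz hlt ↦ neg_le_neg (bound z hz (neg_lt_neg_iff.1 hlt))) hx

theorem mapsTo_Icc_of_deriv_right_inward {l u : ℝ} (hf : ContinuousOn f (Icc s t))
    (hf' : ∀ x ∈ Ico s t, HasDerivWithinAt f (f' x) (Ici x) x) (hs : f s ∈ Icc l u)
    (nonneg_below : ∀ x ∈ Ico s t, f x < l → 0 ≤ f' x)
    (nonpos_above : ∀ x ∈ Ico s t, u < f x → f' x ≤ 0) :
    MapsTo f (Icc s t) (Icc l u) := fun _ hx ↦
  ⟨le_image_of_deriv_le_deriv_right_of_lt_boundary hf hf' hs.1 continuousOn_const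
      (fun z _ ↦ hasDerivWithinAt_const z _ l) nonneg_below hx,
    image_le_of_deriv_right_le_deriv_of_boundary_lt hf hf' hs.2 continuousOn_const
      (fun z _ ↦ hasDerivWithinAt_const z _ u) nonpos_above hx⟩

end Barrier

section Drift

variable {ι : Type*} [Fintype ι] {a Q : ι → ℝ} {b x : ℝ}

/-- The right-hand side of the fluid-limit ODE of the Myopic matching policy at state `x`, for
rates `a`, weights `Q` and capacity `b`. -/
noncomputable def myopicDrift (a Q : ι → ℝ) (b x : ℝ) : ℝ :=
  ∑ d, (1 - Real.exp (-(a d) * (b - x))) * Q d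

theorem myopicDrift_nonneg (ha : ∀ d, 0 ≤ a d) (hQ : ∀ d, 0 ≤ Q d) (hx : x ≤ b) :
    0 ≤ myopicDrift a Q b x := by
  refine Finset.sum_nonneg fun d _ ↦ mul_nonneg (sub_nonneg.2 (Real.exp_le_one_iff.2 ?_)) (hQ d)
  exact mul_nonpos_of_nonpos_of_nonneg (neg_nonpos.2 (ha d)) (sub_nonneg.2 hx)

theorem myopicDrift_nonpos (ha : ∀ d, 0 ≤ a d) (hQ : ∀ d, 0 ≤ Q d) (hx : b ≤ x) :
    myopicDrift a Q b x ≤ 0 := by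
  refine Finset.sum_nonpos fun d _ ↦
    mul_nonpos_of_nonpos_of_nonneg (sub_nonpos.2 (Real.one_le_exp ?_)) (hQ d)
  exact mul_nonneg_of_nonpos_of_nonpos (neg_nonpos.2 (ha d)) (sub_nonpos.2 hx)

theorem myopic_ode_invariance_general (ha : ∀ d, 0 ≤ a d) (hQ : ∀ d, 0 ≤ Q d)
    {l t₀ t₁ : ℝ} {y : ℝ → ℝ} (hy : ContinuousOn y (Icc t₀ t₁)) (hy₀ : y t₀ ∈ Icc l b)
    (hODE : ∀ s ∈ Ico t₀ t₁, HasDerivWithinAt y (myopicDrift a Q b (y s)) (Ici s) s) :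
    MapsTo y (Icc t₀ t₁) (Icc l b) :=
  mapsTo_Icc_of_deriv_right_inward hy hODE hy₀
    (fun _ _ hlt ↦ myopicDrift_nonneg ha hQ (hlt.le.trans (hy₀.1.trans hy₀.2)))
    (fun _ _ hlt ↦ myopicDrift_nonpos ha hQ hlt.le)

end Drift

/-- The interval [0, b] is invariant for the fluid-limit ODE of the
Myopic matching policy. -/
theorem myopic_ode_invariance
    (D : ℕ) (hD : 1 ≤ D) (a Q : Fin D → ℝ)
    (ha : ∀ d, 0 ≤ a d) (hQ : ∀ d, 0 ≤ Q d)
    (b α : ℝ) (hb : 0 ≤ b) (hα : 0 < α)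
    (y : ℝ → ℝ)
    (hy0 : y 0 = 0)
    (hODE : ∀ s ∈ Set.Icc (0 : ℝ) α,
      HasDerivAt y (∑ d, (1 - Real.exp (-(a d) * (b - y s))) * Q d) s) :
    ∀ s ∈ Set.Icc (0 : ℝ) α, 0 ≤ y s ∧ y s ≤ b :=
  myopic_ode_invariance_general ha hQ (HasDerivAt.continuousOn hODE) ⟨hy0.ge, hy0.trans_le hb⟩
    fun s hs ↦ (hODE s (Ico_subset_Icc_self hs)).hasDerivWithinAt
end

section
/- Let a > 0, b > 0 and s > 0 be real numbers. The function y(t) = b − (1/a)·log(1 + (exp(a b) − 1)·exp(−a s t)) satisfies y(0) = 0 and y'(t) = s·(1 − exp(−a (b − y(t)))) for all t ≥ 0. In other words, when all the coefficients a_d are equal to a common value a (the Erdős–Rényi case), the fluid-limit ODE of the Myopic policy admits this closed-form solution. -/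
/-!
The substitution `u = exp (a * (b - y))` linearises `y' = s * (1 - exp (-a * (b - y)))` into
`u' = -a * s * (u - 1)`, whose solution with `u 0 = exp (a * b)` is
`u t = 1 + (exp (a * b) - 1) * exp (-a * s * t)`. The closed form is `y = b - (1 / a) * log u`,
a solution as long as `u` stays positive.
-/

open Real

theorem hasDerivAt_const_add_mul_exp_mul (d c k t : ℝ) :
    HasDerivAt (fun t => d + c * exp (k * t)) (k * (d + c * exp (k * t) - d)) t := by
  have h := (((hasDerivAt_id' t).const_mul k).exp.const_mul c).const_add d
  exact h.congr_deriv (by ring)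

theorem exp_neg_mul_sub_sub_one_div_mul_log {a u : ℝ} (b : ℝ) (ha : a ≠ 0) (hu : 0 < u) :
    exp (-a * (b - (b - (1 / a) * log u))) = u⁻¹ := by
  have h : -a * (b - (b - (1 / a) * log u)) = -log u := by
    field_simp
    ring
  rw [h, exp_neg, exp_log hu]

theorem hasDerivAt_sub_one_div_mul_log_of_linear {u : ℝ → ℝ} {a s t : ℝ} (b : ℝ) (ha : a ≠ 0)
    (hu : 0 < u t) (hu' : HasDerivAt u (-a * s * (u t - 1)) t) :
    HasDerivAt (fun t => b - (1 / a) * log (u t))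
      (s * (1 - exp (-a * (b - (b - (1 / a) * log (u t)))))) t := by
  rw [exp_neg_mul_sub_sub_one_div_mul_log b ha hu]
  refine (((hu'.log hu.ne').const_mul (1 / a)).const_sub b).congr_deriv ?_
  have hu₀ : u t ≠ 0 := hu.ne'
  field_simp

theorem one_add_exp_sub_one_mul_exp_pos {x : ℝ} (hx : 0 ≤ x) (z : ℝ) :
    0 < 1 + (exp x - 1) * exp z := by
  have h : 0 ≤ exp x - 1 := sub_nonneg.2 (one_le_exp hx)
  positivity

theorem myopic_ode_erdos_renyi_closed_form_general (a b s : ℝ) (ha : a ≠ 0) :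
    (fun t : ℝ => b - (1 / a) * log (1 + (exp (a * b) - 1) * exp (-a * s * t))) 0 = 0 ∧
    ∀ t : ℝ, 0 < 1 + (exp (a * b) - 1) * exp (-a * s * t) →
      HasDerivAt
        (fun t : ℝ => b - (1 / a) * log (1 + (exp (a * b) - 1) * exp (-a * s * t)))
        (s * (1 - exp (-a * (b -
          (b - (1 / a) * log (1 + (exp (a * b) - 1) * exp (-a * s * t)))))))
        t := by
  refine ⟨?initial_value, fun t hu => ?ode⟩
  case initial_value => simp [ha]
  case ode =>
    exact hasDerivAt_sub_one_div_mul_log_of_linear b ha hu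
      (hasDerivAt_const_add_mul_exp_mul 1 (exp (a * b) - 1) (-a * s) t)

/-- Closed-form solution of the fluid-limit ODE of the Myopic policy in
the Erdős–Rényi case. -/
theorem myopic_ode_erdos_renyi_closed_form
    (a b s : ℝ) (ha : 0 < a) (hb : 0 < b) (hs : 0 < s) :
    (fun t : ℝ => b - (1 / a) * Real.log (1 + (Real.exp (a * b) - 1) * Real.exp (-a * s * t))) 0 = 0 ∧
    ∀ t : ℝ, 0 ≤ t →
      HasDerivAt
        (fun t : ℝ => b - (1 / a) * Real.log (1 + (Real.exp (a * b) - 1) * Real.exp (-a * s * t)))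
        (s * (1 - Real.exp (-a * (b -
          (b - (1 / a) * Real.log (1 + (Real.exp (a * b) - 1) * Real.exp (-a * s * t)))))))
        t := by
  obtain ⟨initial_value, ode⟩ := myopic_ode_erdos_renyi_closed_form_general a b s ha.ne'
  exact ⟨initial_value, fun t _ => ode t (one_add_exp_sub_one_mul_exp_pos (mul_pos ha hb).le _)⟩
end

section
/- For every real n > 0, every real a with 0 ≤ a ≤ n/2, and every real w with 0 ≤ w ≤ 1: 0 ≤ exp(−a w) − (1 − a/n)^{n w} ≤ a/(n e), where the power is the real power with base 1 − a/n > 0 and e is Euler's number. -/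
/-!
With `x = a / n` and `t = n * w`, the quantities compared are `exp (-x) ^ t` and `(1 - x) ^ t`.
The lower bound is `1 - x ≤ exp (-x)`. For the upper bound, `-x - x ^ 2 ≤ log (1 - x)` shows that
the difference is at most `exp (-(x * t)) * (1 - exp (-(x ^ 2 * t)))`, hence at most
`x * (x * t * exp (-(x * t)))`, and `y * exp (-y)` never exceeds `exp (-1)`.
-/

open Real Set

theorem hasDerivAt_log_one_sub_add_self_add_sq {x : ℝ} (hx : x ≠ 1) :
    HasDerivAt (fun y ↦ log (1 - y) + y + y ^ 2) (x * (1 - 2 * x) / (1 - x)) x := by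
  have hx_ne : 1 - x ≠ 0 := sub_ne_zero.2 hx.symm
  have hlog : HasDerivAt (fun y ↦ log (1 - y)) (-1 / (1 - x)) x :=
    ((hasDerivAt_id' x).const_sub 1).log hx_ne
  refine ((hlog.add (hasDerivAt_id' x)).add (hasDerivAt_pow 2 x)).congr_deriv ?_
  field

theorem neg_self_sub_sq_le_log_one_sub {x : ℝ} (hx : x ≤ 1 / 2) :
    -x - x ^ 2 ≤ log (1 - x) := by
  have hderiv {y : ℝ} (hy : y < 1) := hasDerivAt_log_one_sub_add_self_add_sq hy.ne
  have hmin : IsMinOn (fun y : ℝ ↦ log (1 - y) + y + y ^ 2) (Iic (1 / 2)) 0 := by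
    refine isMinOn_Iic_of_deriv (hderiv one_pos).continuousAt
      (hderiv one_half_lt_one).continuousAt
      (fun y hy ↦ (hderiv (hy.trans one_pos)).differentiableAt.differentiableWithinAt)
      (fun y hy ↦ (hderiv (hy.2.trans one_half_lt_one)).differentiableAt.differentiableWithinAt)
      (fun y (hy : y < 0) ↦ ?_) (fun y ⟨hy0, hy⟩ ↦ ?_)
    · rw [(hderiv (hy.trans one_pos)).deriv]
      exact div_nonpos_of_nonpos_of_nonneg
        (mul_nonpos_of_nonpos_of_nonneg hy.le (by linarith)) (by linarith)
    · rw [(hderiv (hy.trans one_half_lt_one)).deriv]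
      exact div_nonneg (mul_nonneg hy0.le (by linarith)) (by linarith)
  have hnonneg : 0 ≤ log (1 - x) + x + x ^ 2 := by
    simpa using isMinOn_iff.1 hmin x hx
  linarith

theorem one_sub_rpow_le_exp_neg_mul {x t : ℝ} (hx : x ≤ 1) (ht : 0 ≤ t) :
    (1 - x) ^ t ≤ exp (-(x * t)) :=
  calc (1 - x) ^ t ≤ exp (-x) ^ t :=
        rpow_le_rpow (sub_nonneg.2 hx) (one_sub_le_exp_neg x) ht
    _ = exp (-(x * t)) := by rw [← exp_mul, neg_mul]

theorem exp_neg_mul_sub_one_sub_rpow_le {x t : ℝ} (hx : x ≤ 1 / 2) (ht : 0 ≤ t) :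
    exp (-(x * t)) - (1 - x) ^ t ≤ x ^ 2 * t * exp (-(x * t)) := by
  have hlower : (1 - x ^ 2 * t) * exp (-(x * t)) ≤ (1 - x) ^ t :=
    calc (1 - x ^ 2 * t) * exp (-(x * t))
        ≤ exp (-(x ^ 2 * t)) * exp (-(x * t)) := by gcongr; exact one_sub_le_exp_neg _
      _ = exp ((-x - x ^ 2) * t) := by rw [← exp_add]; ring_nf
      _ ≤ exp (log (1 - x) * t) := by gcongr; exact neg_self_sub_sq_le_log_one_sub hx
      _ = (1 - x) ^ t := (rpow_def_of_pos (by linarith) t).symm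
  linarith

theorem exp_neg_mul_sub_one_sub_rpow_le_mul_exp_neg_one {x t : ℝ} (hx0 : 0 ≤ x)
    (hx : x ≤ 1 / 2) (ht : 0 ≤ t) :
    exp (-(x * t)) - (1 - x) ^ t ≤ x * exp (-1) :=
  calc exp (-(x * t)) - (1 - x) ^ t
      ≤ x ^ 2 * t * exp (-(x * t)) := exp_neg_mul_sub_one_sub_rpow_le hx ht
    _ = x * (x * t * exp (-(x * t))) := by ring
    _ ≤ x * exp (-1) := by gcongr; exact mul_exp_neg_le_exp_neg_one _

theorem exp_sub_rpow_bound_general {n a w : ℝ} (hn : 0 < n) (ha0 : 0 ≤ a) (ha : a ≤ n / 2)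
    (hw : 0 ≤ w) :
    0 ≤ exp (-(a * w)) - (1 - a / n) ^ (n * w) ∧
    exp (-(a * w)) - (1 - a / n) ^ (n * w) ≤ a / (n * exp 1) := by
  have hx0 : 0 ≤ a / n := by positivity
  have hx : a / n ≤ 1 / 2 := by rw [div_le_iff₀ hn]; linarith
  have ht : 0 ≤ n * w := by positivity
  have hexponent : a * w = a / n * (n * w) := by field
  have hconst : a / (n * exp 1) = a / n * exp (-1) := by rw [exp_neg]; field
  rw [hexponent, hconst, sub_nonneg]
  exact ⟨one_sub_rpow_le_exp_neg_mul (by linarith) ht,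
    exp_neg_mul_sub_one_sub_rpow_le_mul_exp_neg_one hx0 hx ht⟩

/-- Technical inequality comparing exp(-aw) with (1 - a/n)^(nw) (Lemma B.3). -/
theorem exp_sub_rpow_bound
    (n a w : ℝ) (hn : 0 < n) (ha0 : 0 ≤ a) (ha : a ≤ n / 2)
    (hw0 : 0 ≤ w) (hw1 : w ≤ 1) :
    0 ≤ Real.exp (-(a * w)) - (1 - a / n) ^ (n * w) ∧
    Real.exp (-(a * w)) - (1 - a / n) ^ (n * w) ≤ a / (n * Real.exp 1) :=
  exp_sub_rpow_bound_general hn ha0 ha hw0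
end
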